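/- arXiv:1610.04740 — 2 statements merged into one kernel-verified Lean document; each statement's English description precedes it below -/
import Mathlib

section
/- For all real numbers x > 0 and y > 0, the integral H_{2,2,1}(x,y) = ∫₀^∞ (u+1)^{-2}(ux+1)^{-2}(uy+1)^{-1} u^{7/2} du converges and equals π(2(x^{3/2} + 4x + 4√x + 1)y + (7x^{3/2} + x² + 13x + 7√x + 1)√y + (x + 3√x + 1)y^{3/2} + 2(√x + 1)³√x)/(2(√x + 1)³ x^{3/2} (√y + 1)² √y (√x + √y)²). -/
open MeasureTheory Real

/-- partial fraction identity -/
lemma H221_pf (x y t : ℝ) (hx : 0 < x) (hy : 0 < y) (ht : 0 < t) (hx1 : x - 1 ≠ 0)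
    (hy1 : y - 1 ≠ 0) (hxy : x - y ≠ 0) (A B C D E : ℝ)
    (hD : D = -1 / ((x - 1) ^ 2 * (y - 1)))
    (hA : A = D * (1 - 8 + 4 * x / (x - 1) + 2 * y / (y - 1)))
    (hC : C = 2 / ((y - 1) ^ 2 * (x - y) ^ 2))
    (hE : E = 1 / (x * (x - 1) ^ 2 * (x - y)))
    (hB : B = E * (1 + 2 * (-4 - 2 / (x - 1) - y / (x - y)))) :
    A / (1 + t) + B / (1 + x * t) + C / (1 + y * t) + D * (1 - t) / (1 + t) ^ 2
      + E * (1 - x * t) / (1 + x * t) ^ 2 =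
    2 * t ^ 4 / ((1 + t) ^ 2 * (1 + x * t) ^ 2 * (1 + y * t)) := by
  have h1 : 1 + t ≠ 0 := by positivity
  have h2 : 1 + x * t ≠ 0 := by positivity
  have h3 : 1 + y * t ≠ 0 := by positivity
  subst hA hB hC hD hE
  field_simp
  ring

lemma H221_val (a b : ℝ) (ha : 0 < a) (hb : 0 < b) (hx1 : a ^ 2 - 1 ≠ 0)
    (hy1 : b ^ 2 - 1 ≠ 0) (hxy : a ^ 2 - b ^ 2 ≠ 0) (A B C D E : ℝ)
    (hD : D = -1 / ((a ^ 2 - 1) ^ 2 * (b ^ 2 - 1)))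
    (hA : A = D * (1 - 8 + 4 * a ^ 2 / (a ^ 2 - 1) + 2 * b ^ 2 / (b ^ 2 - 1)))
    (hC : C = 2 / ((b ^ 2 - 1) ^ 2 * (a ^ 2 - b ^ 2) ^ 2))
    (hE : E = 1 / (a ^ 2 * (a ^ 2 - 1) ^ 2 * (a ^ 2 - b ^ 2)))
    (hB : B = E * (1 + 2 * (-4 - 2 / (a ^ 2 - 1) - b ^ 2 / (a ^ 2 - b ^ 2)))) :
    (A + B / a + C / b) * (π / 2) =
      π * (2 * (a ^ 3 + 4 * a ^ 2 + 4 * a + 1) * b ^ 2 +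
          (7 * a ^ 3 + (a ^ 2) ^ 2 + 13 * a ^ 2 + 7 * a + 1) * b +
          (a ^ 2 + 3 * a + 1) * b ^ 3 + 2 * (a + 1) ^ 3 * a) /
        (2 * (a + 1) ^ 3 * a ^ 3 * (b + 1) ^ 2 * b * (a + b) ^ 2) := by
  have e1 : a ^ 2 - 1 = (a - 1) * (a + 1) := by ring
  have e2 : b ^ 2 - 1 = (b - 1) * (b + 1) := by ring
  have e3 : a ^ 2 - b ^ 2 = (a - b) * (a + b) := by ring
  have p1 : a + 1 ≠ 0 := by positivity
  have p2 : b + 1 ≠ 0 := by positivity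
  have p3 : a + b ≠ 0 := by positivity
  rw [e1] at hx1
  rw [e2] at hy1
  rw [e3] at hxy
  have q1 := left_ne_zero_of_mul hx1
  have q2 := left_ne_zero_of_mul hy1
  have q3 := left_ne_zero_of_mul hxy
  rw [e1, e2] at hD hA
  rw [e2, e3] at hC
  rw [e1, e3] at hE hB
  subst hA hB hC hD hE
  field_simp
  ring

lemma H221_rpow (x : ℝ) (hx : 0 ≤ x) : x ^ ((3 : ℝ) / 2) = √x ^ 3 := by
  rw [Real.sqrt_eq_rpow, ← Real.rpow_natCast, ← Real.rpow_mul hx]; norm_num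

lemma H221_rpow7 (x : ℝ) (hx : 0 ≤ x) : x ^ ((7 : ℝ) / 2) = √x ^ 7 := by
  rw [Real.sqrt_eq_rpow, ← Real.rpow_natCast, ← Real.rpow_mul hx]; norm_num

lemma H221_tend (c : ℝ) (hc : 0 < c) :
    Filter.Tendsto (fun u : ℝ => √u / (1 + c * u)) Filter.atTop (nhds 0) := by
  have h : Filter.Tendsto (fun u : ℝ => c⁻¹ * (√u)⁻¹) Filter.atTop (nhds (c⁻¹ * 0)) :=
    (tendsto_inv_atTop_zero.comp Real.tendsto_sqrt_atTop).const_mul _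
  rw [mul_zero] at h
  refine squeeze_zero' ?_ ?_ h
  · filter_upwards [Filter.eventually_gt_atTop 0] with u hu
    positivity
  · filter_upwards [Filter.eventually_gt_atTop 0] with u hu
    have hs : 0 < √u := Real.sqrt_pos.2 hu
    rw [← mul_inv, ← one_div, div_le_div_iff₀ (by positivity) (by positivity)]
    nlinarith [Real.mul_self_sqrt hu.le]

lemma H221_tendarc (c : ℝ) (hc : 0 < c) :
    Filter.Tendsto (fun u : ℝ => arctan (c * √u)) Filter.atTop (nhds (π / 2)) :=
  (Real.tendsto_arctan_atTop.mono_right nhdsWithin_le_nhds).comp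
    (Real.tendsto_sqrt_atTop.const_mul_atTop hc)

lemma H221_derivarc (c u : ℝ) (hu : 0 < u) :
    HasDerivAt (fun u : ℝ => arctan (c * √u)) (c / (1 + c ^ 2 * u) / (2 * √u)) u := by
  have h := ((Real.hasDerivAt_sqrt hu.ne').const_mul c).arctan
  convert h using 1
  rw [mul_pow, Real.sq_sqrt hu.le]
  have hs : 0 < √u := Real.sqrt_pos.2 hu
  field_simp

lemma H221_derivrat (c u : ℝ) (hc : 0 < c) (hu : 0 < u) :
    HasDerivAt (fun u : ℝ => √u / (1 + c * u))
      ((1 - c * u) / (1 + c * u) ^ 2 / (2 * √u)) u := by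
  have h1 : HasDerivAt (fun u : ℝ => 1 + c * u) c u := by
    simpa using ((hasDerivAt_id u).const_mul c).const_add 1
  have hp : 1 + c * u ≠ 0 := by positivity
  have h := (Real.hasDerivAt_sqrt hu.ne').div h1 hp
  refine HasDerivAt.congr_deriv h ?_
  have hs : 0 < √u := Real.sqrt_pos.2 hu
  have hq := Real.sq_sqrt hu.le
  field_simp
  rw [hq]
  ring

/-- the integrand -/
noncomputable def H221f (x y u : ℝ) : ℝ :=
  (u + 1) ^ (-2 : ℤ) * (u * x + 1) ^ (-2 : ℤ) * (u * y + 1)⁻¹ * u ^ ((7 : ℝ) / 2)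

/-- the value -/
noncomputable def H221v (x y : ℝ) : ℝ :=
      Real.pi * (2 * (x ^ ((3 : ℝ) / 2) + 4 * x + 4 * Real.sqrt x + 1) * y +
          (7 * x ^ ((3 : ℝ) / 2) + x ^ 2 + 13 * x + 7 * Real.sqrt x + 1) *
            Real.sqrt y +
          (x + 3 * Real.sqrt x + 1) * y ^ ((3 : ℝ) / 2) +
          2 * (Real.sqrt x + 1) ^ 3 * Real.sqrt x) /
        (2 * (Real.sqrt x + 1) ^ 3 * x ^ ((3 : ℝ) / 2) * (Real.sqrt y + 1) ^ 2 *
          Real.sqrt y * (Real.sqrt x + Real.sqrt y) ^ 2)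

lemma H221f_nonneg (x y u : ℝ) (hx : 0 < x) (hy : 0 < y) (hu : 0 < u) : 0 ≤ H221f x y u := by
  unfold H221f
  positivity

lemma H221_generic (x y : ℝ) (hx : 0 < x) (hy : 0 < y) (hx1 : x - 1 ≠ 0)
    (hy1 : y - 1 ≠ 0) (hxy : x - y ≠ 0) :
    IntegrableOn (H221f x y) (Set.Ioi 0) ∧ ∫ u in Set.Ioi (0 : ℝ), H221f x y u = H221v x y := by
  obtain ⟨D, hD⟩ : ∃ D : ℝ, D = -1 / ((x - 1) ^ 2 * (y - 1)) := ⟨_, rfl⟩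
  obtain ⟨A, hA⟩ : ∃ A : ℝ, A = D * (1 - 8 + 4 * x / (x - 1) + 2 * y / (y - 1)) := ⟨_, rfl⟩
  obtain ⟨C, hC⟩ : ∃ C : ℝ, C = 2 / ((y - 1) ^ 2 * (x - y) ^ 2) := ⟨_, rfl⟩
  obtain ⟨E, hE⟩ : ∃ E : ℝ, E = 1 / (x * (x - 1) ^ 2 * (x - y)) := ⟨_, rfl⟩
  obtain ⟨B, hB⟩ : ∃ B : ℝ, B = E * (1 + 2 * (-4 - 2 / (x - 1) - y / (x - y))) := ⟨_, rfl⟩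
  have ha : 0 < √x := Real.sqrt_pos.2 hx
  have hb : 0 < √y := Real.sqrt_pos.2 hy
  have hax := Real.sq_sqrt hx.le
  have hby := Real.sq_sqrt hy.le
  let G : ℝ → ℝ := fun u => A * arctan (1 * √u) + B / √x * arctan (√x * √u)
    + C / √y * arctan (√y * √u) + D * (√u / (1 + 1 * u)) + E * (√u / (1 + x * u))
  have hder : ∀ u ∈ Set.Ioi (0 : ℝ), HasDerivAt G (H221f x y u) u := by
    intro u hu
    have hu : 0 < u := hu
    have h := (((((H221_derivarc 1 u hu).const_mul A).add
      ((H221_derivarc (√x) u hu).const_mul (B / √x))).add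
      ((H221_derivarc (√y) u hu).const_mul (C / √y))).add
      ((H221_derivrat 1 u one_pos hu).const_mul D)).add
      ((H221_derivrat x u hx hu).const_mul E)
    refine HasDerivAt.congr_deriv h ?_
    rw [hax, hby]
    have hpf := H221_pf x y u hx hy hu hx1 hy1 hxy A B C D E hD hA hC hE hB
    have hs : 0 < √u := Real.sqrt_pos.2 hu
    have hq := Real.sq_sqrt hu.le
    have e : H221f x y u =
        2 * u ^ 4 / ((1 + u) ^ 2 * (1 + x * u) ^ 2 * (1 + y * u)) / (2 * √u) := by
      unfold H221f
      rw [H221_rpow7 u hu.le, zpow_neg, zpow_neg]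
      have : u ^ 4 = √u ^ 7 * √u := by
        rw [← hq, Real.sqrt_sq hs.le]; ring
      rw [this, show u * x + 1 = 1 + x * u by ring, show u * y + 1 = 1 + y * u by ring,
        show u + 1 = 1 + u by ring]
      have h1 : 1 + u ≠ 0 := by positivity
      have h2 : 1 + x * u ≠ 0 := by positivity
      have h3 : 1 + y * u ≠ 0 := by positivity
      norm_cast
      field_simp
    rw [e, ← hpf]
    have k1 : ∀ P Q : ℝ, B / √x * (√x / P / Q) = B / P / Q := by
      intro P Q
      rw [show B / √x * (√x / P / Q) = B * (√x / √x) / P / Q by ring, div_self ha.ne', mul_one]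
    have k2 : ∀ P Q : ℝ, C / √y * (√y / P / Q) = C / P / Q := by
      intro P Q
      rw [show C / √y * (√y / P / Q) = C * (√y / √y) / P / Q by ring, div_self hb.ne', mul_one]
    rw [k1, k2]
    simp only [one_mul, one_pow]
    ring
  have hcont : ContinuousWithinAt G (Set.Ici 0) 0 := by
    apply ContinuousAt.continuousWithinAt
    have h1 : ∀ c : ℝ, ContinuousAt (fun u : ℝ => √u / (1 + c * u)) 0 := by
      intro c
      apply ContinuousAt.div
      · fun_prop
      · fun_prop
      · simp
    have h2 : ∀ c : ℝ, ContinuousAt (fun u : ℝ => arctan (c * √u)) 0 := by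
      intro c
      exact (Real.continuous_arctan.comp (continuous_const.mul Real.continuous_sqrt)).continuousAt
    exact ((((continuousAt_const.mul (h2 1)).add (continuousAt_const.mul (h2 _))).add
      (continuousAt_const.mul (h2 _))).add (continuousAt_const.mul (h1 1))).add
      (continuousAt_const.mul (h1 x))
  have hlim : Filter.Tendsto G Filter.atTop
      (nhds (A * (π / 2) + B / √x * (π / 2) + C / √y * (π / 2) + D * 0 + E * 0)) :=
    (((((H221_tendarc 1 one_pos).const_mul A).add
      ((H221_tendarc (√x) ha).const_mul (B / √x))).add
      ((H221_tendarc (√y) hb).const_mul (C / √y))).add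
      ((H221_tend 1 one_pos).const_mul D)).add
      ((H221_tend x hx).const_mul E)
  have hnn : ∀ u ∈ Set.Ioi (0 : ℝ), 0 ≤ H221f x y u := fun u hu => H221f_nonneg x y u hx hy hu
  refine ⟨integrableOn_Ioi_deriv_of_nonneg hcont hder hnn hlim, ?_⟩
  rw [integral_Ioi_of_hasDerivAt_of_nonneg hcont hder hnn hlim]
  have hG0 : G 0 = 0 := by simp [G]
  rw [hG0]
  have hv := H221_val (√x) (√y) ha hb (by rwa [hax]) (by rwa [hby]) (by rwa [hax, hby])
    A B C D E (by rwa [hax, hby]) (by rwa [hax, hby]) (by rwa [hax, hby]) (by rwa [hax, hby])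
    (by rwa [hax, hby])
  unfold H221v
  rw [H221_rpow x hx.le, H221_rpow y hy.le]
  rw [hax, hby] at hv
  rw [← hv]
  ring

lemma H221_anti (x y x' y' u : ℝ) (hx : 0 < x) (hy : 0 < y) (hxx : x ≤ x') (hyy : y ≤ y')
    (hu : 0 < u) : H221f x' y' u ≤ H221f x y u := by
  have hx' : 0 < x' := by linarith
  have hy' : 0 < y' := by linarith
  unfold H221f
  rw [zpow_neg, zpow_neg, zpow_neg]
  norm_cast
  gcongr

lemma H221_meas (x y : ℝ) : Measurable (H221f x y) := by
  unfold H221f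
  simp only [zpow_neg]
  norm_cast
  fun_prop

lemma H221_ne (c d : ℝ) (hd : d ≠ 0) : ∀ᶠ t in nhdsWithin (0 : ℝ) {0}ᶜ, c + d * t ≠ 0 := by
  by_cases hc : c = 0
  · filter_upwards [self_mem_nhdsWithin] with t ht
    rw [hc, zero_add]
    exact mul_ne_zero hd ht
  · apply Filter.Eventually.filter_mono nhdsWithin_le_nhds
    have : ContinuousAt (fun t : ℝ => c + d * t) 0 := by fun_prop
    exact this.eventually_ne (by simpa using hc)

lemma H221_gt (c d e : ℝ) (hc : e < c) : ∀ᶠ t in nhdsWithin (0 : ℝ) {0}ᶜ, e < c + d * t := by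
  apply Filter.Eventually.filter_mono nhdsWithin_le_nhds
  have : ContinuousAt (fun t : ℝ => c + d * t) 0 := by fun_prop
  exact this.eventually (lt_mem_nhds (by simpa using hc))

lemma H221_ev (x y : ℝ) (hx : 0 < x) (hy : 0 < y) :
    ∀ᶠ t in nhdsWithin (0 : ℝ) {0}ᶜ,
      IntegrableOn (H221f (x + 1 * t) (y + 2 * t)) (Set.Ioi 0) ∧
      ∫ u in Set.Ioi (0 : ℝ), H221f (x + 1 * t) (y + 2 * t) u = H221v (x + 1 * t) (y + 2 * t) := by
  filter_upwards [H221_gt x 1 0 hx, H221_gt y 2 0 hy, H221_ne (x - 1) 1 one_ne_zero,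
    H221_ne (y - 1) 2 two_ne_zero, H221_ne (x - y) (-1) (by norm_num)] with t h1 h2 h3 h4 h5
  apply H221_generic _ _ h1 h2
  · convert h3 using 1; ring
  · convert h4 using 1; ring
  · convert h5 using 1; ring

lemma H221_full (x y : ℝ) (hx : 0 < x) (hy : 0 < y) :
    IntegrableOn (H221f x y) (Set.Ioi 0) ∧ ∫ u in Set.Ioi (0 : ℝ), H221f x y u = H221v x y := by
  obtain ⟨x₀, y₀, hx₀, hy₀, hxx, hyy, hint⟩ : ∃ x₀ y₀ : ℝ, 0 < x₀ ∧ 0 < y₀ ∧ x₀ < x ∧ y₀ < y ∧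
      IntegrableOn (H221f x₀ y₀) (Set.Ioi 0) := by
    obtain ⟨t, h1, h2, h3, h4, h5⟩ := ((H221_ev (x / 2) (y / 2) (by positivity)
      (by positivity)).and ((H221_gt (x / 2) 1 0 (by positivity)).and
      ((H221_gt (y / 2) 2 0 (by positivity)).and ((H221_gt (x / 2) (-1) 0 (by positivity)).and
      (H221_gt (y / 2) (-2) 0 (by positivity)))))).exists
    exact ⟨_, _, h2, h3, by linarith, by linarith, h1.1⟩
  have hdom : ∀ x' y' : ℝ, x₀ ≤ x' → y₀ ≤ y' →
      ∀ᵐ u ∂(volume.restrict (Set.Ioi (0 : ℝ))), ‖H221f x' y' u‖ ≤ H221f x₀ y₀ u := by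
    intro x' y' h1 h2
    filter_upwards [ae_restrict_mem measurableSet_Ioi] with u hu
    rw [Real.norm_of_nonneg (H221f_nonneg _ _ _ (by linarith) (by linarith) hu)]
    exact H221_anti _ _ _ _ _ hx₀ hy₀ h1 h2 hu
  refine ⟨hint.mono' (H221_meas x y).aestronglyMeasurable (hdom x y hxx.le hyy.le), ?_⟩
  have hT : Filter.Tendsto (fun t : ℝ => ∫ u in Set.Ioi (0 : ℝ), H221f (x + 1 * t) (y + 2 * t) u)
      (nhdsWithin (0 : ℝ) {0}ᶜ) (nhds (∫ u in Set.Ioi (0 : ℝ), H221f x y u)) := by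
    apply tendsto_integral_filter_of_dominated_convergence (H221f x₀ y₀)
    · exact Filter.Eventually.of_forall fun t => (H221_meas _ _).aestronglyMeasurable
    · filter_upwards [H221_gt x 1 _ hxx, H221_gt y 2 _ hyy] with t h1 h2
      exact hdom _ _ h1.le h2.le
    · exact hint
    · filter_upwards [ae_restrict_mem measurableSet_Ioi] with u hu
      have hu : 0 < u := hu
      have hc : ContinuousAt (fun t : ℝ => H221f (x + 1 * t) (y + 2 * t) u) 0 := by
        unfold H221f
        simp only [zpow_neg]
        norm_cast
        have h1 : ((u * (x + 1 * 0) + 1) ^ 2 : ℝ) ≠ 0 := by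
          rw [mul_zero, add_zero]; positivity
        have h2 : (u * (y + 2 * 0) + 1 : ℝ) ≠ 0 := by
          rw [mul_zero, add_zero]; positivity
        refine ContinuousAt.mul (ContinuousAt.mul (ContinuousAt.mul continuousAt_const ?_) ?_)
          continuousAt_const
        · exact ContinuousAt.inv₀ (by fun_prop) h1
        · exact ContinuousAt.inv₀ (by fun_prop) h2
      have := hc.tendsto
      simp only [mul_zero, add_zero] at this
      exact this.mono_left nhdsWithin_le_nhds
  have hV : Filter.Tendsto (fun t : ℝ => H221v (x + 1 * t) (y + 2 * t))
      (nhdsWithin (0 : ℝ) {0}ᶜ) (nhds (H221v x y)) := by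
    have hc : ContinuousAt (fun t : ℝ => H221v (x + 1 * t) (y + 2 * t)) 0 := by
      unfold H221v
      have r1 : ContinuousAt (fun t : ℝ => (x + 1 * t) ^ ((3 : ℝ) / 2)) 0 :=
        ContinuousAt.rpow_const (by fun_prop) (Or.inr (by norm_num))
      have r2 : ContinuousAt (fun t : ℝ => (y + 2 * t) ^ ((3 : ℝ) / 2)) 0 :=
        ContinuousAt.rpow_const (by fun_prop) (Or.inr (by norm_num))
      apply ContinuousAt.div
      · fun_prop
      · fun_prop
      · simp only [mul_zero, add_zero]
        positivity
    have := hc.tendsto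
    simp only [mul_zero, add_zero] at this
    exact this.mono_left nhdsWithin_le_nhds
  refine tendsto_nhds_unique hT (hV.congr' ?_)
  filter_upwards [H221_ev x y hx hy] with t ht
  exact ht.2.symm

/-- For all reals `x, y > 0`, the integral
`H₂₂₁(x,y) = ∫₀^∞ (u+1)⁻² (ux+1)⁻² (uy+1)⁻¹ u^(7/2) du` converges and equals the
stated rational expression in `√x, √y`. -/
theorem H_two_two_one_eval (x y : ℝ) (hx : 0 < x) (hy : 0 < y) :
    IntegrableOn
      (fun u : ℝ =>
        (u + 1) ^ (-2 : ℤ) * (u * x + 1) ^ (-2 : ℤ) * (u * y + 1)⁻¹ *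
          u ^ ((7 : ℝ) / 2))
      (Set.Ioi 0) ∧
    ∫ u in Set.Ioi (0 : ℝ),
        (u + 1) ^ (-2 : ℤ) * (u * x + 1) ^ (-2 : ℤ) * (u * y + 1)⁻¹ *
          u ^ ((7 : ℝ) / 2) =
      Real.pi * (2 * (x ^ ((3 : ℝ) / 2) + 4 * x + 4 * Real.sqrt x + 1) * y +
          (7 * x ^ ((3 : ℝ) / 2) + x ^ 2 + 13 * x + 7 * Real.sqrt x + 1) *
            Real.sqrt y +
          (x + 3 * Real.sqrt x + 1) * y ^ ((3 : ℝ) / 2) +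
          2 * (Real.sqrt x + 1) ^ 3 * Real.sqrt x) /
        (2 * (Real.sqrt x + 1) ^ 3 * x ^ ((3 : ℝ) / 2) * (Real.sqrt y + 1) ^ 2 *
          Real.sqrt y * (Real.sqrt x + Real.sqrt y) ^ 2) := by
  exact H221_full x y hx hy
end

section
/- For all real numbers x > 0 and y > 0 with x ≠ y, the integral H_{3,1,1}(x,y) = ∫₀^∞ (u+1)^{-3}(ux+1)^{-1}(uy+1)^{-1} u^{7/2} du converges and equals (π/(8(x − y)))·(−(3x + 9√x + 8)/((√x + 1)³√x) − 8/(√y + 1) − 5/(√y + 1)² − 2/(√y + 1)³ + 8/√y). -/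
open MeasureTheory Real

lemma G_aux (s α β γ δ ε : ℝ) (hs : 0 < s)
    (h : ∀ t : ℝ, 0 < t → α / (1+t^2) + β * (1-t^2)/(1+t^2)^2 + γ * (1-3*t^2)/(1+t^2)^3
      + δ * (1-5*t^2)/(1+t^2)^4 + ε * s/(1+s^2*t^2) = t^6/((1+t^2)^3*(1+s^2*t^2))) :
    IntegrableOn (fun u : ℝ => (√u)^5 / ((1+u)^3*(1+s^2*u))) (Set.Ioi 0) ∧
    ∫ u in Set.Ioi (0:ℝ), (√u)^5 / ((1+u)^3*(1+s^2*u)) = π * (α + ε) := by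
  set A : ℝ → ℝ := fun t => 2 * (α * arctan t + β * (t/(1+t^2)) + γ * (t/(1+t^2)^2)
    + δ * (t/(1+t^2)^3) + ε * arctan (s*t)) with hA
  have hcont : Continuous A := by
    have : ∀ t : ℝ, 1 + t^2 ≠ 0 := fun t => by positivity
    have h2 : ∀ t : ℝ, (1 + t^2)^2 ≠ 0 := fun t => by positivity
    have h3 : ∀ t : ℝ, (1 + t^2)^3 ≠ 0 := fun t => by positivity
    rw [hA]
    have c1 : Continuous fun t : ℝ => t/(1+t^2) := by fun_prop (disch := assumption)
    have c2 : Continuous fun t : ℝ => t/(1+t^2)^2 := by fun_prop (disch := assumption)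
    have c3 : Continuous fun t : ℝ => t/(1+t^2)^3 := by fun_prop (disch := assumption)
    have c4 : Continuous fun t : ℝ => arctan t := continuous_arctan
    have c5 : Continuous fun t : ℝ => arctan (s*t) := continuous_arctan.comp (by fun_prop)
    fun_prop
  have hderA : ∀ t : ℝ, 0 < t → HasDerivAt A (2 * (t^6/((1+t^2)^3*(1+s^2*t^2)))) t := by
    intro t ht
    have hw : HasDerivAt (fun t : ℝ => 1 + t^2) (2*t) t := by
      simpa using (hasDerivAt_pow 2 t).const_add 1
    have d0 := (hasDerivAt_arctan t).const_mul α
    have d1 := ((hasDerivAt_id t).div hw (by positivity)).const_mul β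
    have d2 := ((hasDerivAt_id t).div (hw.pow 2) (by simp only [Pi.pow_apply]; positivity)).const_mul γ
    have d3 := ((hasDerivAt_id t).div (hw.pow 3) (by simp only [Pi.pow_apply]; positivity)).const_mul δ
    have d4 := ((hasDerivAt_arctan (s*t)).comp t ((hasDerivAt_id t).const_mul s)).const_mul ε
    have d := ((((d0.add d1).add d2).add d3).add d4).const_mul 2
    refine d.congr_deriv ?_
    rw [← h t ht]
    have : (1+t^2) ≠ 0 := by positivity
    have : (1+s^2*t^2) ≠ 0 := by positivity
    simp only [Pi.pow_apply, id, mul_pow]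
    field_simp
    push_cast
    ring
  have hder : ∀ u ∈ Set.Ioi (0:ℝ), HasDerivAt (fun u => A (√u))
      ((√u)^5 / ((1+u)^3*(1+s^2*u))) u := by
    intro u hu
    have hu : 0 < u := hu
    have hq : 0 < √u := sqrt_pos.2 hu
    refine ((hderA _ hq).comp u (hasDerivAt_sqrt hu.ne')).congr_deriv ?_
    rw [sq_sqrt hu.le]
    field_simp
  have hpos : ∀ u ∈ Set.Ioi (0:ℝ), 0 ≤ (√u)^5 / ((1+u)^3*(1+s^2*u)) := by
    intro u hu
    have hu : 0 < u := hu
    positivity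
  have hsq : Filter.Tendsto (fun u : ℝ => √u) Filter.atTop Filter.atTop := tendsto_sqrt_atTop
  have hlim : Filter.Tendsto A Filter.atTop (nhds (π * (α+ε))) := by
    have l0 : Filter.Tendsto arctan Filter.atTop (nhds (π/2)) :=
      tendsto_arctan_atTop.mono_right nhdsWithin_le_nhds
    have l4 : Filter.Tendsto (fun t => arctan (s*t)) Filter.atTop (nhds (π/2)) :=
      l0.comp (Filter.tendsto_id.const_mul_atTop hs)
    have key : ∀ n : ℕ, Filter.Tendsto (fun t : ℝ => t/(1+t^2)^(n+1)) Filter.atTop (nhds 0) := by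
      intro n
      refine squeeze_zero' ?_ ?_ tendsto_inv_atTop_zero
      · filter_upwards [Filter.eventually_gt_atTop 0] with t ht
        positivity
      · filter_upwards [Filter.eventually_gt_atTop 0] with t ht
        rw [div_le_iff₀ (by positivity), inv_mul_eq_div, le_div_iff₀ ht]
        have : 1 ≤ (1+t^2)^n := one_le_pow₀ (by nlinarith)
        rw [pow_succ]
        nlinarith
    have l1 := key 0
    have l2 := key 1
    have l3 := key 2
    simp only [zero_add, pow_one, Nat.reduceAdd] at l1 l2 l3
    have := (((((l0.const_mul α).add (l1.const_mul β)).add (l2.const_mul γ)).add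
      (l3.const_mul δ)).add (l4.const_mul ε)).const_mul 2
    convert this using 2
    ring
  have hl2 := hlim.comp hsq
  have hc0 : ContinuousWithinAt (fun u => A (√u)) (Set.Ici 0) 0 :=
    (hcont.comp continuous_sqrt).continuousWithinAt
  refine ⟨integrableOn_Ioi_deriv_of_nonneg hc0 hder hpos hl2, ?_⟩
  rw [integral_Ioi_of_hasDerivAt_of_nonneg hc0 hder hpos hl2]
  simp [hA]

lemma G_eval (s : ℝ) (hs : 0 < s) :
    IntegrableOn (fun u : ℝ => (√u)^5 / ((1+u)^3*(1+s^2*u))) (Set.Ioi 0) ∧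
    ∫ u in Set.Ioi (0:ℝ), (√u)^5 / ((1+u)^3*(1+s^2*u))
      = π / 8 * ((3*s^2+9*s+8)/((s+1)^3*s)) := by
  by_cases h1 : s = 1
  · subst h1
    obtain ⟨a, b⟩ := G_aux 1 (5/16) (-11/16) (13/24) (-1/6) 0 one_pos (by
      intro t ht
      have : (1+t^2) ≠ 0 := by positivity
      field_simp
      ring)
    refine ⟨a, b.trans ?_⟩
    norm_num
    ring
  · have hk : 1 - s^2 ≠ 0 := by
      intro h
      have : (1-s)*(1+s) = 0 := by linarith
      rcases mul_eq_zero.1 this with h | h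
      · exact h1 (by linarith)
      · linarith
    obtain ⟨k, hkd⟩ : ∃ k, k = 1 - s^2 := ⟨_, rfl⟩
    rw [← hkd] at hk
    obtain ⟨a, b⟩ := G_aux s ((-3/k - 3*s^2/k^2 - s^4/k^3) + (3/k+s^2/k^2)/2 + 3*(-1/k)/8)
      ((3/k+s^2/k^2)/2 + 3*(-1/k)/8) ((-1/k)/4) 0 (1/k^3/s) hs (by
      intro t ht
      have : (1+t^2) ≠ 0 := by positivity
      have : (1+s^2*t^2) ≠ 0 := by positivity
      field_simp
      rw [hkd]
      ring)
    refine ⟨a, b.trans ?_⟩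
    rw [mul_comm_div, mul_div_assoc]
    congr 1
    field_simp
    rw [hkd]
    ring


/-- For all reals `x, y > 0` with `x ≠ y`, the integral
`H₃₁₁(x,y) = ∫₀^∞ (u+1)⁻³ (ux+1)⁻¹ (uy+1)⁻¹ u^(7/2) du` converges and equals
`(π/(8(x−y)))(−(3x+9√x+8)/((√x+1)³√x) − 8/(√y+1) − 5/(√y+1)² − 2/(√y+1)³ + 8/√y)`. -/
theorem H_three_one_one_eval (x y : ℝ) (hx : 0 < x) (hy : 0 < y) (hxy : x ≠ y) :
    IntegrableOn
      (fun u : ℝ =>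
        (u + 1) ^ (-3 : ℤ) * (u * x + 1)⁻¹ * (u * y + 1)⁻¹ * u ^ ((7 : ℝ) / 2))
      (Set.Ioi 0) ∧
    ∫ u in Set.Ioi (0 : ℝ),
        (u + 1) ^ (-3 : ℤ) * (u * x + 1)⁻¹ * (u * y + 1)⁻¹ * u ^ ((7 : ℝ) / 2) =
      Real.pi / (8 * (x - y)) *
        (-((3 * x + 9 * Real.sqrt x + 8) / ((Real.sqrt x + 1) ^ 3 * Real.sqrt x)) -
          8 / (Real.sqrt y + 1) - 5 / (Real.sqrt y + 1) ^ 2 -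
          2 / (Real.sqrt y + 1) ^ 3 + 8 / Real.sqrt y) := by

  obtain ⟨ix, ex⟩ := G_eval (√x) (sqrt_pos.2 hx)
  obtain ⟨iy, ey⟩ := G_eval (√y) (sqrt_pos.2 hy)
  rw [sq_sqrt hx.le] at ix ex
  rw [sq_sqrt hy.le] at iy ey
  have hd : x - y ≠ 0 := sub_ne_zero.2 hxy
  have hE : Set.EqOn (fun u : ℝ => (x-y)⁻¹ * ((√u)^5 / ((1+u)^3*(1+y*u))
        - (√u)^5 / ((1+u)^3*(1+x*u))))
      (fun u : ℝ =>
        (u + 1) ^ (-3 : ℤ) * (u * x + 1)⁻¹ * (u * y + 1)⁻¹ * u ^ ((7 : ℝ) / 2)) (Set.Ioi 0) := by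
    intro u hu
    have hu : 0 < u := hu
    have h7 : u ^ ((7:ℝ)/2) = (√u)^5 * u := by
      have : u ^ ((7:ℝ)/2) = (√u)^7 := by
        rw [sqrt_eq_rpow, ← rpow_natCast, ← rpow_mul hu.le]
        norm_num
      rw [this]
      nth_rewrite 3 [← sq_sqrt hu.le]
      ring
    have e3 : (u+1)^(-3:ℤ) = ((1+u)^3)⁻¹ := by
      rw [zpow_neg, add_comm]; norm_cast
    simp only [h7, e3]
    have : 1 + u ≠ 0 := by positivity
    have : 1 + x*u ≠ 0 := by positivity
    have : 1 + y*u ≠ 0 := by positivity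
    rw [show u * x + 1 = 1 + x*u by ring, show u * y + 1 = 1 + y*u by ring]
    field_simp
    ring
  have hI := (iy.sub ix).const_mul (x-y)⁻¹
  refine ⟨IntegrableOn.congr_fun hI hE measurableSet_Ioi, ?_⟩
  rw [← setIntegral_congr_fun measurableSet_Ioi hE, integral_const_mul, integral_sub iy ix, ex, ey]
  have hsx := sqrt_pos.2 hx
  have hsy := sqrt_pos.2 hy
  have hf : (3*y+9*√y+8)/((√y+1)^3*√y) = - (8 / (√y + 1)) - 5 / (√y + 1) ^ 2 -
          2 / (√y + 1) ^ 3 + 8 / √y := by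
    nth_rewrite 1 [← sq_sqrt hy.le]
    field_simp
    ring
  rw [hf]
  field_simp
  ring
end
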